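/- arXiv:2604.02312 — 2 statements merged into one kernel-verified Lean document; each statement's English description precedes it below -/
import Mathlib

section
/- Let $\beta > 0$, $x \in \mathbb{R}^d$ and $\eta \in \mathcal{P}_2(\mathbb{R}^d)$. Then $\sup_{y \in \mathbb{R}^d}\Big\{-\tfrac{\beta}{2}|x-y|^2 + \inf_{\rho \in \mathcal{P}_2(\mathbb{R}^d)}\big\{H(\rho\,|\,\gamma_y) + \tfrac{\beta}{2}\mathcal{W}_2^2(\rho,\eta)\big\}\Big\} = \inf_{\kappa \in \mathcal{P}_2(\mathbb{R}^d),\ \bar\kappa = \bar\eta}\big\{H(\kappa\,|\,\gamma_x) + \tfrac{\beta}{2}\mathcal{W}_2^2(\kappa,\eta)\big\}$. -/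
open MeasureTheory ProbabilityTheory Filter Topology Set
open scoped ENNReal RealInnerProductSpace

noncomputable section

abbrev Euc (d : ℕ) := EuclideanSpace ℝ (Fin d)

/-- Density of the Gaussian with mean `x` and identity covariance. -/
def gaussDensity {d : ℕ} (x y : Euc d) : ℝ :=
  (2 * Real.pi) ^ (-(d : ℝ) / 2) * Real.exp (-‖y - x‖ ^ 2 / 2)

/-- Gaussian measure with mean `x` and identity covariance. -/
def gaussian {d : ℕ} (x : Euc d) : Measure (Euc d) :=
  volume.withDensity fun y => ENNReal.ofReal (gaussDensity x y)

/-- Finite second moment. -/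
def FiniteSecondMoment {d : ℕ} (μ : Measure (Euc d)) : Prop :=
  ∫⁻ x, ENNReal.ofReal (‖x‖ ^ 2) ∂μ < ⊤

/-- Barycenter of a measure. -/
def bary {d : ℕ} (μ : Measure (Euc d)) : Euc d := ∫ x, x ∂μ

open Classical in
/-- Relative entropy `H(ρ | η)`, valued in `ℝ≥0∞`. -/
def relEnt {d : ℕ} (ρ η : Measure (Euc d)) : ℝ≥0∞ :=
  if ρ ≪ η ∧ Integrable (fun x => Real.log (ρ.rnDeriv η x).toReal) ρ then
    ENNReal.ofReal (∫ x, Real.log (ρ.rnDeriv η x).toReal ∂ρ)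
  else ⊤

/-- Squared 2-Wasserstein distance. -/
def W2sq {d : ℕ} (μ ν : Measure (Euc d)) : ℝ≥0∞ :=
  ⨅ (π : Measure (Euc d × Euc d)) (_ : π.fst = μ ∧ π.snd = ν),
    ∫⁻ p, ENNReal.ofReal (‖p.1 - p.2‖ ^ 2) ∂π



lemma gaussDensity_pos {d : ℕ} (x y : Euc d) : 0 < gaussDensity x y := by
  unfold gaussDensity; positivity

lemma measurable_gaussDensity {d : ℕ} (x : Euc d) : Measurable (gaussDensity x) := by
  have : Continuous (gaussDensity x) := by
    unfold gaussDensity; fun_prop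
  exact this.measurable

lemma gaussian_prob {d : ℕ} (x : Euc d) : IsProbabilityMeasure (gaussian x) := by
  constructor
  have h1 : ∫ y : Euc d, gaussDensity x y = 1 := by
    have h := GaussianFourier.integral_rexp_neg_mul_sq_norm (V := Euc d) (b := 1 / 2) (by norm_num)
    have h2 : ∫ y : Euc d, Real.exp (-‖y - x‖ ^ 2 / 2)
        = (2 * Real.pi) ^ ((d : ℝ) / 2) := by
      rw [integral_sub_right_eq_self (fun y : Euc d => Real.exp (-‖y‖ ^ 2 / 2)) x]
      rw [show (2 * Real.pi) = Real.pi / (1 / 2) by ring]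
      rw [finrank_euclideanSpace_fin] at h
      rw [← h]
      congr 1
      ext v
      congr 1
      ring
    unfold gaussDensity
    rw [integral_const_mul, h2, ← Real.rpow_add (by positivity)]
    rw [show -(d : ℝ) / 2 + d / 2 = 0 by ring, Real.rpow_zero]
  have hint : Integrable (gaussDensity x) volume := by
    by_contra hc
    rw [integral_undef hc] at h1
    exact zero_ne_one h1
  rw [gaussian, withDensity_apply _ MeasurableSet.univ, Measure.restrict_univ,
    ← ofReal_integral_eq_lintegral_ofReal hint (ae_of_all _ fun y => (gaussDensity_pos x y).le),
    h1, ENNReal.ofReal_one]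

lemma FiniteSecondMoment.memLp {d : ℕ} {μ : Measure (Euc d)} (h : FiniteSecondMoment μ) :
    MemLp (fun w : Euc d => w) 2 μ := by
  refine (memLp_two_iff_integrable_sq_norm (by fun_prop)).2 ⟨by fun_prop, ?_⟩
  unfold FiniteSecondMoment at h
  rw [hasFiniteIntegral_iff_ofReal (ae_of_all _ fun w => by positivity)]
  exact h

lemma finiteSecondMoment_of_memLp {d : ℕ} {μ : Measure (Euc d)}
    (h : MemLp (fun w : Euc d => w) 2 μ) : FiniteSecondMoment μ := by
  have h2 := (memLp_two_iff_integrable_sq_norm (by fun_prop)).1 h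
  have := h2.2
  rw [hasFiniteIntegral_iff_ofReal (ae_of_all _ fun w => by positivity)] at this
  exact this

/-- Translate of a measure. -/
def shift {d : ℕ} (a : Euc d) (ρ : Measure (Euc d)) : Measure (Euc d) :=
  ρ.map fun w => w + a

section shifts
variable {d : ℕ} (a : Euc d) (ρ : Measure (Euc d)) [IsProbabilityMeasure ρ]

lemma measurable_tr {d : ℕ} (a : Euc d) : Measurable (fun w : Euc d => w + a) := by fun_prop

lemma shift_prob : IsProbabilityMeasure (shift a ρ) :=
  Measure.isProbabilityMeasure_map (measurable_tr a).aemeasurable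

lemma shift_fsm (h : FiniteSecondMoment ρ) : FiniteSecondMoment (shift a ρ) := by
  apply finiteSecondMoment_of_memLp
  unfold shift
  rw [memLp_map_measure_iff (by fun_prop) (by fun_prop)]
  exact h.memLp.add (memLp_const a)

lemma shift_bary (h : FiniteSecondMoment ρ) : bary (shift a ρ) = bary ρ + a := by
  unfold bary shift
  rw [integral_map (by fun_prop) (by fun_prop),
    integral_add (h.memLp.integrable (by norm_num)) (integrable_const _)]
  simp

lemma integral_aff (h : FiniteSecondMoment ρ) (b : Euc d) (c : ℝ) :
    Integrable (fun w => ⟪b, w⟫ + c) ρ ∧ ∫ w, (⟪b, w⟫ + c) ∂ρ = ⟪b, bary ρ⟫ + c := by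
  have hi : Integrable (fun w : Euc d => w) ρ := h.memLp.integrable (by norm_num)
  have hi2 : Integrable (fun w : Euc d => ⟪b, w⟫) ρ := hi.const_inner b
  refine ⟨hi2.add (integrable_const c), ?_⟩
  rw [integral_add hi2 (integrable_const c), integral_inner hi]
  simp [bary]

end shifts

section ent
variable {d : ℕ} (a y z : Euc d) (ρ : Measure (Euc d)) [IsProbabilityMeasure ρ]

lemma gaussDensity_shift (w : Euc d) :
    gaussDensity y (w - a) = gaussDensity z w
      * Real.exp ((‖w - z‖ ^ 2 - ‖w - a - y‖ ^ 2) / 2) := by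
  unfold gaussDensity
  rw [mul_assoc, ← Real.exp_add]
  congr 2
  ring

lemma shift_eq (hac : ρ ≪ gaussian y) :
    shift a ρ = (gaussian z).withDensity (fun w => ρ.rnDeriv (gaussian y) (w - a)
      * ENNReal.ofReal (Real.exp ((‖w - z‖ ^ 2 - ‖w - a - y‖ ^ 2) / 2))) := by
  have := gaussian_prob y
  have := gaussian_prob z
  have : SigmaFinite (gaussian y) := inferInstance
  have : ρ.HaveLebesgueDecomposition (gaussian y) :=
    Measure.haveLebesgueDecomposition_of_sigmaFinite ρ (gaussian y)
  have hf := Measure.measurable_rnDeriv ρ (gaussian y)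
  have hg := measurable_gaussDensity y
  have hgz := measurable_gaussDensity z
  have hr : Measurable (fun w : Euc d => ENNReal.ofReal
      (Real.exp ((‖w - z‖ ^ 2 - ‖w - a - y‖ ^ 2) / 2))) := by fun_prop
  have hfa : Measurable (fun w : Euc d => ρ.rnDeriv (gaussian y) (w - a)) :=
    hf.comp (by fun_prop)
  ext s hs
  have e1 : (gaussian z).withDensity (fun w => ρ.rnDeriv (gaussian y) (w - a)
      * ENNReal.ofReal (Real.exp ((‖w - z‖ ^ 2 - ‖w - a - y‖ ^ 2) / 2))) s
      = ∫⁻ w in s, ENNReal.ofReal (gaussDensity y (w - a)) * ρ.rnDeriv (gaussian y) (w - a) := by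
    unfold gaussian
    rw [← withDensity_mul _ (by fun_prop) (by exact hfa.mul hr), withDensity_apply _ hs]
    refine lintegral_congr fun w => ?_
    rw [gaussDensity_shift a y z w, ENNReal.ofReal_mul (gaussDensity_pos z w).le]
    simp only [Pi.mul_apply]
    ring
  rw [e1, shift, Measure.map_apply (by fun_prop) hs]
  have e2 : ρ = volume.withDensity
      (fun w => ENNReal.ofReal (gaussDensity y w) * ρ.rnDeriv (gaussian y) w) := by
    have e3 : (gaussian y).withDensity (ρ.rnDeriv (gaussian y)) = ρ :=
      Measure.withDensity_rnDeriv_eq ρ (gaussian y) hac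
    have e4 : (gaussian y).withDensity (ρ.rnDeriv (gaussian y)) = volume.withDensity
      (fun w => ENNReal.ofReal (gaussDensity y w) * ρ.rnDeriv (gaussian y) w) :=
      (withDensity_mul _ (by fun_prop) hf).symm
    exact e3.symm.trans e4
  conv_lhs => rw [e2]
  rw [withDensity_apply _ (measurable_tr a hs)]
  have mp : MeasurePreserving (fun w : Euc d => w + a) volume volume :=
    measurePreserving_add_right volume a
  have := mp.setLIntegral_comp_preimage hs (f := fun w =>
    ENNReal.ofReal (gaussDensity y (w - a)) * ρ.rnDeriv (gaussian y) (w - a))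
    (by exact ((hg.comp (by fun_prop)).ennreal_ofReal).mul hfa)
  rw [← this]
  simp

lemma relEnt_shift (h2 : FiniteSecondMoment ρ) (hfin : relEnt ρ (gaussian y) ≠ ⊤) :
    relEnt (shift a ρ) (gaussian z) ≠ ⊤ ∧
    (relEnt (shift a ρ) (gaussian z)).toReal ≤ (relEnt ρ (gaussian y)).toReal
      + (‖bary ρ + a - z‖ ^ 2 - ‖bary ρ - y‖ ^ 2) / 2 := by
  have := gaussian_prob y
  have := gaussian_prob z
  have := shift_prob a ρ
  have hcond : ρ ≪ gaussian y ∧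
      Integrable (fun x => Real.log (ρ.rnDeriv (gaussian y) x).toReal) ρ := by
    by_contra hc
    exact hfin (by unfold relEnt; rw [if_neg hc])
  obtain ⟨hac, hint⟩ := hcond
  have : SigmaFinite (gaussian y) := inferInstance
  have : ρ.HaveLebesgueDecomposition (gaussian y) :=
    Measure.haveLebesgueDecomposition_of_sigmaFinite ρ (gaussian y)
  have hf := Measure.measurable_rnDeriv ρ (gaussian y)
  have hfa : Measurable (fun w : Euc d => ρ.rnDeriv (gaussian y) (w - a)) :=
    hf.comp (by fun_prop)
  have hr : Measurable (fun w : Euc d => ENNReal.ofReal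
      (Real.exp ((‖w - z‖ ^ 2 - ‖w - a - y‖ ^ 2) / 2))) := by fun_prop
  have hs := shift_eq a y z ρ hac
  have hac' : shift a ρ ≪ gaussian z := by
    rw [hs]; exact withDensity_absolutelyContinuous _ _
  have hrn : (shift a ρ).rnDeriv (gaussian z) =ᵐ[shift a ρ]
      (fun w => ρ.rnDeriv (gaussian y) (w - a)
      * ENNReal.ofReal (Real.exp ((‖w - z‖ ^ 2 - ‖w - a - y‖ ^ 2) / 2))) := by
    apply hac'.ae_le
    have h0 := Measure.rnDeriv_withDensity (gaussian z) (hfa.mul hr)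
    have h1 : (shift a ρ).rnDeriv (gaussian z) = ((gaussian z).withDensity
      (fun w => ρ.rnDeriv (gaussian y) (w - a)
      * ENNReal.ofReal (Real.exp ((‖w - z‖ ^ 2 - ‖w - a - y‖ ^ 2) / 2)))).rnDeriv (gaussian z) := by
      rw [← hs]
    rw [h1]
    exact h0
  have hrn2 : ∀ᵐ w ∂ρ, Real.log ((shift a ρ).rnDeriv (gaussian z) (w + a)).toReal =
      Real.log (ρ.rnDeriv (gaussian y) w).toReal
        + (⟪y + a - z, w⟫ + (‖a - z‖ ^ 2 - ‖y‖ ^ 2) / 2) := by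
    have h3 := ae_of_ae_map (measurable_tr a).aemeasurable hrn
    filter_upwards [h3, Measure.rnDeriv_pos hac,
      hac.ae_le (Measure.rnDeriv_lt_top ρ (gaussian y))] with w hw hp0 hlt
    have hp := ENNReal.toReal_pos hp0.ne' hlt.ne
    rw [hw]
    simp only [add_sub_cancel_right, ENNReal.toReal_mul]
    rw [ENNReal.toReal_ofReal (Real.exp_pos _).le, Real.log_mul hp.ne' (Real.exp_pos _).ne',
      Real.log_exp]
    congr 1
    rw [add_sub_assoc w a z, norm_add_sq_real, norm_sub_sq_real w y, add_sub_assoc y a z,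
      inner_add_left, real_inner_comm w y, real_inner_comm w (a - z)]
    ring
  obtain ⟨ia, iae⟩ := integral_aff ρ h2 (y + a - z) ((‖a - z‖ ^ 2 - ‖y‖ ^ 2) / 2)
  have hmeas : AEStronglyMeasurable
      (fun w => Real.log ((shift a ρ).rnDeriv (gaussian z) w).toReal) (shift a ρ) :=
    (Measure.measurable_rnDeriv _ _).ennreal_toReal.log.aestronglyMeasurable
  have hint' : Integrable (fun w => Real.log ((shift a ρ).rnDeriv (gaussian z) w).toReal)
      (shift a ρ) := by
    refine (integrable_map_measure hmeas (measurable_tr a).aemeasurable).2 ?_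
    exact (integrable_congr hrn2).2 (hint.add ia)
  have hval : ∫ w, Real.log ((shift a ρ).rnDeriv (gaussian z) w).toReal ∂(shift a ρ)
      = ∫ w, Real.log (ρ.rnDeriv (gaussian y) w).toReal ∂ρ
        + (‖bary ρ + a - z‖ ^ 2 - ‖bary ρ - y‖ ^ 2) / 2 := by
    refine (integral_map (measurable_tr a).aemeasurable hmeas).trans ?_
    rw [integral_congr_ae hrn2, integral_add hint ia, iae]
    congr 1
    rw [add_sub_assoc (bary ρ) a z, norm_add_sq_real, norm_sub_sq_real (bary ρ) y, add_sub_assoc y a z,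
      inner_add_left, real_inner_comm (bary ρ) y, real_inner_comm (bary ρ) (a - z)]
    ring
  have hnn := InformationTheory.integral_llr_add_sub_measure_univ_nonneg hac' hint'
  simp only [probReal_univ, add_sub_cancel_right] at hnn
  change 0 ≤ ∫ w, Real.log ((shift a ρ).rnDeriv (gaussian z) w).toReal ∂(shift a ρ) at hnn
  have hnn0 := InformationTheory.integral_llr_add_sub_measure_univ_nonneg hac hint
  simp only [probReal_univ, add_sub_cancel_right] at hnn0
  change 0 ≤ ∫ w, Real.log (ρ.rnDeriv (gaussian y) w).toReal ∂ρ at hnn0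
  unfold relEnt
  rw [if_pos ⟨hac', hint'⟩, if_pos ⟨hac, hint⟩]
  refine ⟨ENNReal.ofReal_ne_top, ?_⟩
  rw [ENNReal.toReal_ofReal hnn, ENNReal.toReal_ofReal hnn0, hval]

end ent

section wass
variable {d : ℕ} (a : Euc d) (ρ η : Measure (Euc d)) [IsProbabilityMeasure ρ]
  [IsProbabilityMeasure η]

lemma cost_memLp (h2 : FiniteSecondMoment ρ) (hη : FiniteSecondMoment η)
    (π : Measure (Euc d × Euc d)) (h1 : π.fst = ρ) (h3 : π.snd = η) :
    MemLp (fun p : Euc d × Euc d => p.1) 2 π ∧ MemLp (fun p : Euc d × Euc d => p.2) 2 π := by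
  constructor
  · have := h2.memLp
    rw [← h1, Measure.fst, memLp_map_measure_iff (by fun_prop) (by fun_prop)] at this
    exact this
  · have := hη.memLp
    rw [← h3, Measure.snd, memLp_map_measure_iff (by fun_prop) (by fun_prop)] at this
    exact this

lemma W2sq_ne_top (h2 : FiniteSecondMoment ρ) (hη : FiniteSecondMoment η) :
    W2sq ρ η ≠ ⊤ := by
  obtain ⟨m1, m2⟩ := cost_memLp ρ η h2 hη (ρ.prod η) (by simp) (by simp)
  have m := m1.sub m2
  have h := ((memLp_two_iff_integrable_sq_norm (by fun_prop)).1 m).2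
  rw [hasFiniteIntegral_iff_ofReal (ae_of_all _ fun w => by positivity)] at h
  refine ne_top_of_le_ne_top h.ne ?_
  unfold W2sq
  exact iInf₂_le (ρ.prod η) ⟨by simp, by simp⟩

lemma W2sq_shift (h2 : FiniteSecondMoment ρ) (hη : FiniteSecondMoment η) :
    (W2sq (shift a ρ) η).toReal ≤ (W2sq ρ η).toReal
      + (‖a‖ ^ 2 + 2 * ⟪a, bary ρ - bary η⟫) := by
  have := shift_prob a ρ
  have ht' := W2sq_ne_top (shift a ρ) η (shift_fsm a ρ h2) hη
  have ht := W2sq_ne_top ρ η h2 hη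
  rw [← sub_le_iff_le_add, ← ENNReal.ofReal_le_iff_le_toReal ht]
  conv_rhs => unfold W2sq
  refine le_iInf₂ fun π hπ => ?_
  obtain ⟨h1, h3⟩ := hπ
  have hπp : IsProbabilityMeasure π := by
    constructor
    rw [← Measure.fst_univ, h1]; simp
  obtain ⟨m1, m2⟩ := cost_memLp ρ η h2 hη π h1 h3
  have i1 := m1.integrable (by norm_num)
  have i2 := m2.integrable (by norm_num)
  have hi := (memLp_two_iff_integrable_sq_norm (by fun_prop)).1 (m1.sub m2)
  simp only [Pi.sub_apply] at hi
  have b1 : ∫ p, p.1 ∂π = bary ρ := by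
    rw [← h1, bary, Measure.fst, integral_map (by fun_prop) (by fun_prop)]
  have b2 : ∫ p, p.2 ∂π = bary η := by
    rw [← h3, bary, Measure.snd, integral_map (by fun_prop) (by fun_prop)]
  have i12 : Integrable (fun p : Euc d × Euc d => p.1 - p.2) π := i1.sub i2
  have ii : Integrable (fun p : Euc d × Euc d => ‖a‖ ^ 2 + 2 * ⟪a, p.1 - p.2⟫) π :=
    (integrable_const _).add ((i12.const_inner a).const_mul 2)
  have hpt : ∀ p : Euc d × Euc d, ‖p.1 + a - p.2‖ ^ 2
      = ‖p.1 - p.2‖ ^ 2 + (‖a‖ ^ 2 + 2 * ⟪a, p.1 - p.2⟫) := by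
    intro p
    rw [show p.1 + a - p.2 = (p.1 - p.2) + a by abel, norm_add_sq_real,
      real_inner_comm a (p.1 - p.2)]
    ring
  have hi' : Integrable (fun p : Euc d × Euc d => ‖p.1 + a - p.2‖ ^ 2) π := by
    simp_rw [hpt]; exact hi.add ii
  have hval : ∫ p, ‖p.1 + a - p.2‖ ^ 2 ∂π = ∫ p, ‖p.1 - p.2‖ ^ 2 ∂π
      + (‖a‖ ^ 2 + 2 * ⟪a, bary ρ - bary η⟫) := by
    simp_rw [hpt]
    rw [integral_add hi ii, integral_add (integrable_const _) ((i12.const_inner a).const_mul 2),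
      integral_const_mul, integral_inner i12, integral_sub i1 i2, b1, b2]
    simp
  have hle : W2sq (shift a ρ) η ≤ ENNReal.ofReal (∫ p, ‖p.1 + a - p.2‖ ^ 2 ∂π) := by
    have hm : Measurable (fun p : Euc d × Euc d => (p.1 + a, p.2)) := by fun_prop
    unfold W2sq
    have q1 : (π.map fun p => (p.1 + a, p.2)).fst = shift a ρ := by
      rw [Measure.fst, Measure.map_map (by fun_prop) hm, shift, ← h1, Measure.fst,
        Measure.map_map (by fun_prop) (by fun_prop)]
      rfl
    have q2 : (π.map fun p => (p.1 + a, p.2)).snd = η := by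
      rw [Measure.snd, Measure.map_map (by fun_prop) hm, ← h3, Measure.snd]
      rfl
    refine (iInf₂_le (π.map fun p => (p.1 + a, p.2)) ⟨q1, q2⟩).trans ?_
    rw [lintegral_map (by fun_prop) hm,
        ofReal_integral_eq_lintegral_ofReal hi' (ae_of_all _ fun p => by positivity)]
  rw [← ofReal_integral_eq_lintegral_ofReal hi (ae_of_all _ fun p => by positivity)]
  apply ENNReal.ofReal_le_ofReal
  have := ENNReal.toReal_mono ENNReal.ofReal_ne_top hle
  rw [ENNReal.toReal_ofReal (integral_nonneg fun p => by positivity), hval] at this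
  linarith

end wass

lemma cost_shift {d : ℕ} (β : ℝ) (hβ : 0 < β) (a y z : Euc d)
    (ρ η : Measure (Euc d)) [IsProbabilityMeasure ρ] [IsProbabilityMeasure η]
    (h2 : FiniteSecondMoment ρ) (hη : FiniteSecondMoment η) (C : ℝ)
    (hC : (‖bary ρ + a - z‖ ^ 2 - ‖bary ρ - y‖ ^ 2) / 2
      + β / 2 * (‖a‖ ^ 2 + 2 * ⟪a, bary ρ - bary η⟫) ≤ C) :
    ((relEnt (shift a ρ) (gaussian z) + ENNReal.ofReal (β / 2) * W2sq (shift a ρ) η : ℝ≥0∞) : EReal)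
      ≤ (C : EReal)
        + ((relEnt ρ (gaussian y) + ENNReal.ofReal (β / 2) * W2sq ρ η : ℝ≥0∞) : EReal) := by
  have := shift_prob a ρ
  by_cases hfin : relEnt ρ (gaussian y) = ⊤
  · rw [hfin]; simp
  obtain ⟨e1, e2⟩ := relEnt_shift a y z ρ h2 hfin
  have ht' := W2sq_ne_top (shift a ρ) η (shift_fsm a ρ h2) hη
  have ht := W2sq_ne_top ρ η h2 hη
  have hw := W2sq_shift a ρ η h2 hη
  have n1 := ENNReal.add_ne_top.2 ⟨e1, ENNReal.mul_ne_top (ENNReal.ofReal_ne_top (r := β / 2)) ht'⟩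
  have n2 := ENNReal.add_ne_top.2 ⟨hfin, ENNReal.mul_ne_top (ENNReal.ofReal_ne_top (r := β / 2)) ht⟩
  rw [← EReal.coe_ennreal_toReal n1, ← EReal.coe_ennreal_toReal n2]
  rw [← EReal.coe_add, EReal.coe_le_coe_iff]
  rw [ENNReal.toReal_add e1 (ENNReal.mul_ne_top ENNReal.ofReal_ne_top ht'),
    ENNReal.toReal_add hfin (ENNReal.mul_ne_top ENNReal.ofReal_ne_top ht),
    ENNReal.toReal_mul, ENNReal.toReal_mul, ENNReal.toReal_ofReal (by positivity)]
  have := mul_le_mul_of_nonneg_left hw (show 0 ≤ β / 2 by positivity)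
  linarith

/-- Sup-inf representation of the static Schrödinger--Bass cost. -/
theorem sup_inf_SB_cost {d : ℕ} (β : ℝ) (hβ : 0 < β) (x : Euc d)
    (η : Measure (Euc d)) [IsProbabilityMeasure η] (hη : FiniteSecondMoment η) :
    (⨆ y : Euc d,
        (((-(β / 2 * ‖x - y‖ ^ 2) : ℝ) : EReal)
          + ⨅ (ρ : Measure (Euc d)) (_ : IsProbabilityMeasure ρ ∧ FiniteSecondMoment ρ),
              ((relEnt ρ (gaussian y) + ENNReal.ofReal (β / 2) * W2sq ρ η : ℝ≥0∞) : EReal)))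
      = ⨅ (κ : Measure (Euc d))
          (_ : IsProbabilityMeasure κ ∧ FiniteSecondMoment κ ∧ bary κ = bary η),
          ((relEnt κ (gaussian x) + ENNReal.ofReal (β / 2) * W2sq κ η : ℝ≥0∞) : EReal) := by
  apply le_antisymm
  · refine iSup_le fun y => le_iInf₂ fun κ hκ => ?_
    obtain ⟨hp, h2, hb⟩ := hκ
    have hs := shift_prob ((1 + β)⁻¹ • (y - bary η)) κ
    have key := cost_shift β hβ ((1 + β)⁻¹ • (y - bary η)) x y κ η h2 hη
      (β / 2 * ‖x - y‖ ^ 2) (by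
        rw [hb]
        set u := y - bary η with hu
        set v := x - bary η with hv
        have hβ1 : (1 + β) ≠ 0 := by positivity
        have e1 : bary η + (1 + β)⁻¹ • u - y = -((β * (1 + β)⁻¹) • u) := by
          have : y = bary η + u := by rw [hu]; abel
          rw [this]
          have : (β * (1 + β)⁻¹) = 1 - (1 + β)⁻¹ := by field_simp; ring
          rw [this, sub_smul, one_smul]; abel
        have e2 : bary η - x = -v := by rw [hv]; abel
        have e3 : x - y = v - u := by rw [hu, hv]; abel
        clear_value u v
        rw [e1, e2, e3, norm_neg, norm_neg, norm_smul, norm_smul, mul_pow, mul_pow, sub_self,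
          inner_zero_right, Real.norm_eq_abs, Real.norm_eq_abs, sq_abs, sq_abs]
        have h4 : 0 ≤ ‖u - (1 + β) • (u - v)‖ ^ 2 := by positivity
        have h5 : u - (1 + β) • (u - v) = (1 + β) • v - β • u := by
          rw [smul_sub, add_smul, add_smul, one_smul, one_smul]; abel
        rw [h5, norm_sub_sq_real, norm_smul, norm_smul, mul_pow, mul_pow, Real.norm_eq_abs,
          Real.norm_eq_abs, sq_abs, sq_abs, inner_smul_left, inner_smul_right] at h4
        simp only [conj_trivial] at h4
        rw [norm_sub_sq_real]
        have h6 : β / 2 * (‖v‖ ^ 2 - 2 * ⟪v, u⟫ + ‖u‖ ^ 2) -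
          (((β * (1 + β)⁻¹) ^ 2 * ‖u‖ ^ 2 - ‖v‖ ^ 2) / 2
            + β / 2 * (((1 + β)⁻¹) ^ 2 * ‖u‖ ^ 2 + 2 * 0)) =
          (1 + β)⁻¹ / 2 * ((1 + β) ^ 2 * ‖v‖ ^ 2 - 2 * ((1 + β) * (β * ⟪v, u⟫)) + β ^ 2 * ‖u‖ ^ 2) := by
          field_simp
          ring
        have h7 : 0 ≤ (1 + β)⁻¹ / 2 := by positivity
        have := mul_nonneg h7 h4
        linarith)
    refine (add_le_add_right (iInf₂_le (shift ((1 + β)⁻¹ • (y - bary η)) κ)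
      ⟨hs, shift_fsm _ κ h2⟩) _).trans ?_
    refine (add_le_add_right key _).trans ?_
    rw [← add_assoc, ← EReal.coe_add, neg_add_cancel, EReal.coe_zero, zero_add]
  · refine le_iSup_of_le (x - β⁻¹ • (bary η - x)) ?_
    set y := x - β⁻¹ • (bary η - x) with hy
    rw [add_comm]
    rw [EReal.coe_neg, ← sub_eq_add_neg]
    refine EReal.le_sub_iff_add_le (Or.inl (EReal.coe_ne_bot _)) (Or.inl (EReal.coe_ne_top _)) |>.2 ?_
    refine le_iInf₂ fun ρ hρ => ?_
    obtain ⟨hp, h2⟩ := hρ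
    have hs := shift_prob (bary η - bary ρ) ρ
    have hbb : bary (shift (bary η - bary ρ) ρ) = bary η := by
      rw [shift_bary _ ρ h2]; abel
    have key := cost_shift β hβ (bary η - bary ρ) y x ρ η h2 hη
      (-(β / 2 * ‖x - y‖ ^ 2)) (by
        set c := bary η - x with hc
        set m := bary η - bary ρ with hm
        have e1 : bary ρ + m - x = c := by rw [hm, hc]; abel
        have e2 : bary ρ - y = c + β⁻¹ • c - m := by
          rw [hy, hm, hc]; abel
        have e3 : x - y = β⁻¹ • c := by rw [hy]; abel
        have e4 : bary ρ - bary η = -m := by rw [hm]; abel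
        have e5 : c + β⁻¹ • c = (1 + β⁻¹) • c := by rw [add_smul, one_smul]
        clear_value y c m
        rw [e1, e2, e3, e4, e5, inner_neg_right, real_inner_self_eq_norm_sq, norm_sub_sq_real,
          norm_smul, norm_smul, mul_pow, mul_pow, Real.norm_eq_abs,
          Real.norm_eq_abs, sq_abs, sq_abs, inner_smul_left]
        simp only [conj_trivial]
        have h4 : 0 ≤ ‖c - β • m‖ ^ 2 := by positivity
        rw [norm_sub_sq_real, norm_smul, mul_pow, Real.norm_eq_abs, sq_abs, inner_smul_right] at h4
        have h6 : -(β / 2 * ((β⁻¹) ^ 2 * ‖c‖ ^ 2)) -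
          ((‖c‖ ^ 2 - ((1 + β⁻¹) ^ 2 * ‖c‖ ^ 2 - 2 * ((1 + β⁻¹) * ⟪c, m⟫) + ‖m‖ ^ 2)) / 2
            + β / 2 * (‖m‖ ^ 2 + 2 * -‖m‖ ^ 2)) =
          (1 + β) / (2 * β ^ 2) * (‖c‖ ^ 2 - 2 * (β * ⟪c, m⟫) + β ^ 2 * ‖m‖ ^ 2) := by
          field_simp
          ring
        have := mul_nonneg (show 0 ≤ (1 + β) / (2 * β ^ 2) by positivity) h4
        linarith)
    refine (add_le_add_left (iInf₂_le (shift (bary η - bary ρ) ρ)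
      ⟨hs, shift_fsm _ ρ h2, hbb⟩) _).trans ?_
    refine (add_le_add_left key _).trans ?_
    rw [add_right_comm, ← EReal.coe_add, neg_add_cancel, EReal.coe_zero, zero_add]
end
end

section
/- With $C^\beta(x,\eta) := \inf\{H(\kappa\,|\,\gamma_x) + \tfrac{\beta}{2}\mathcal{W}_2^2(\kappa,\eta) : \kappa \in \mathcal{P}_2(\mathbb{R}^d),\ \bar\kappa = \bar\eta\}$, one has for every $x \in \mathbb{R}^d$ and $\eta \in \mathcal{P}_2(\mathbb{R}^d)$: $\lim_{\beta \uparrow \infty} C^\beta(x,\eta) = H(\eta\,|\,\gamma_x)$ (possibly $+\infty$) and $\lim_{\beta \downarrow 0} C^\beta(x,\eta) = \tfrac12|\bar\eta - x|^2$. -/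
open MeasureTheory ProbabilityTheory Filter Topology Set
open scoped ENNReal RealInnerProductSpace

noncomputable section

/-- Static Schrödinger--Bass cost `C^β(x, η)`. -/
def SBcost {d : ℕ} (β : ℝ) (x : Euc d) (η : Measure (Euc d)) : ℝ≥0∞ :=
  ⨅ (κ : Measure (Euc d))
      (_ : IsProbabilityMeasure κ ∧ FiniteSecondMoment κ ∧ bary κ = bary η),
    relEnt κ (gaussian x) + ENNReal.ofReal (β / 2) * W2sq κ η

/-! ### Relative entropy -/
theorem relEnt_eq_klDiv {d : ℕ} (ρ η : Measure (Euc d)) [IsProbabilityMeasure ρ]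
    [IsProbabilityMeasure η] : relEnt ρ η = InformationTheory.klDiv ρ η := by
  classical
  rw [InformationTheory.klDiv_def]
  unfold relEnt
  simp [llr_def]

theorem young_pt (h f : ℝ) (hh : 0 ≤ h) :
    h * f - (Real.exp f - 1) ≤ InformationTheory.klFun h := by
  rw [InformationTheory.klFun_apply]
  rcases hh.eq_or_lt with rfl | hp
  · simp; linarith [Real.exp_pos f]
  · have h1 := Real.add_one_le_exp (f - Real.log h)
    rw [Real.exp_sub, Real.exp_log hp, le_div_iff₀ hp] at h1
    nlinarith

/-- The (integrated) Donsker-Varadhan functional. -/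
def dvJ {d : ℕ} (κ γ : Measure (Euc d)) (f : Euc d → ℝ) : ℝ :=
  ∫ y, f y ∂κ - ∫ y, (Real.exp (f y) - 1) ∂γ

theorem dv_le {d : ℕ} (κ γ : Measure (Euc d)) [IsProbabilityMeasure κ]
    [IsProbabilityMeasure γ] (f : Euc d → ℝ) (hf : Integrable f κ)
    (hef : Integrable (fun y => Real.exp (f y) - 1) γ) :
    ENNReal.ofReal (dvJ κ γ f) ≤ relEnt κ γ := by
  by_cases h : κ ≪ γ ∧ Integrable (llr κ γ) κ
  swap
  · unfold relEnt
    rw [if_neg (by simpa [llr_def] using h)]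
    exact le_top
  · rw [relEnt_eq_klDiv, InformationTheory.klDiv_eq_integral_klFun, if_pos h]
    apply ENNReal.ofReal_le_ofReal
    have := Measure.haveLebesgueDecomposition_of_sigmaFinite κ γ
    have hi : Integrable (fun y => (κ.rnDeriv γ y).toReal • f y) γ :=
      (integrable_rnDeriv_smul_iff h.1).2 hf
    unfold dvJ
    rw [← integral_rnDeriv_smul h.1, ← integral_sub hi hef]
    apply integral_mono (hi.sub hef)
    · exact (InformationTheory.integrable_klFun_rnDeriv_iff h.1).2 h.2
    · intro y
      exact young_pt _ _ ENNReal.toReal_nonneg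

/-! ### Coupling bound -/
theorem W2sq_lower {d : ℕ} (κ η : Measure (Euc d)) [IsProbabilityMeasure κ]
    [IsProbabilityMeasure η] (f : Euc d → ℝ) (hfκ : Integrable f κ) (hfη : Integrable f η)
    (ε C : ℝ) (hC : 0 < C) (h : ∀ y z, f z ≤ f y + ε + C * ‖y - z‖ ^ 2) :
    ENNReal.ofReal (∫ y, f y ∂η - ∫ y, f y ∂κ - ε) ≤ ENNReal.ofReal C * W2sq κ η := by
  have hC0 : ENNReal.ofReal C ≠ 0 := by simpa using hC
  rw [mul_comm, ← ENNReal.div_le_iff_le_mul (Or.inl hC0) (Or.inl ENNReal.ofReal_ne_top)]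
  unfold W2sq
  refine le_iInf₂ fun π hπ => ?_
  rw [ENNReal.div_le_iff_le_mul (Or.inl hC0) (Or.inl ENNReal.ofReal_ne_top)]
  by_cases ht : ∫⁻ p, ENNReal.ofReal (‖p.1 - p.2‖ ^ 2) ∂π = ⊤
  · rw [ht, ENNReal.top_mul hC0]; exact le_top
  have hprob : IsProbabilityMeasure π := by
    constructor
    rw [← Measure.fst_univ, hπ.1]; exact measure_univ
  have hm : Measurable fun p : Euc d × Euc d => ‖p.1 - p.2‖ ^ 2 := by fun_prop
  have hint : Integrable (fun p : Euc d × Euc d => ‖p.1 - p.2‖ ^ 2) π :=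
    (lintegral_ofReal_ne_top_iff_integrable hm.aestronglyMeasurable
      (ae_of_all _ fun _ => by positivity)).1 ht
  rw [← ofReal_integral_eq_lintegral_ofReal hint (ae_of_all _ fun _ => by positivity), mul_comm,
    ← ENNReal.ofReal_mul hC.le]
  apply ENNReal.ofReal_le_ofReal
  have mp1 : MeasurePreserving (Prod.fst : Euc d × Euc d → Euc d) π κ :=
    ⟨measurable_fst, hπ.1⟩
  have mp2 : MeasurePreserving (Prod.snd : Euc d × Euc d → Euc d) π η :=
    ⟨measurable_snd, hπ.2⟩
  have i1 : Integrable (fun p : Euc d × Euc d => f p.1) π := mp1.integrable_comp_of_integrable hfκ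
  have i2 : Integrable (fun p : Euc d × Euc d => f p.2) π := mp2.integrable_comp_of_integrable hfη
  have e1 : ∫ p, f p.1 ∂π = ∫ y, f y ∂κ := by
    rw [← mp1.map_eq, integral_map measurable_fst.aemeasurable]
    rw [mp1.map_eq]; exact hfκ.1
  have e2 : ∫ p, f p.2 ∂π = ∫ y, f y ∂η := by
    rw [← mp2.map_eq, integral_map measurable_snd.aemeasurable]
    rw [mp2.map_eq]; exact hfη.1
  have key : ∫ p, f p.2 ∂π ≤ ∫ p, (f p.1 + ε + C * ‖p.1 - p.2‖ ^ 2) ∂π :=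
    integral_mono i2 ((i1.add (integrable_const _)).add (hint.const_mul C)) fun p => h p.1 p.2
  have i3 : Integrable (fun p : Euc d × Euc d => f p.1 + ε) π := i1.add (integrable_const _)
  rw [integral_add i3 (hint.const_mul C), integral_add i1 (integrable_const _), integral_const_mul, e1, e2] at key
  simp at key
  linarith

/-! ### Bounded approximation -/
theorem exp_lip (M a b : ℝ) (ha : a ≤ M) (hb : b ≤ M) :
    |Real.exp a - Real.exp b| ≤ Real.exp M * |a - b| := by
  wlog hab : b ≤ a generalizing a b
  · rw [abs_sub_comm, abs_sub_comm a b]; exact this b a hb ha (by linarith)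
  rw [abs_of_nonneg (by simpa using hab), abs_of_nonneg (by linarith)]
  have h1 := Real.add_one_le_exp (b - a)
  have h2 : Real.exp b = Real.exp a * Real.exp (b - a) := by rw [← Real.exp_add]; ring_nf
  have h3 := Real.exp_le_exp.2 ha
  nlinarith [Real.exp_pos a]

theorem approx_cc {d : ℕ} (η γ : Measure (Euc d)) [IsProbabilityMeasure η]
    [IsProbabilityMeasure γ] (f : Euc d → ℝ) (hf : Measurable f) (M : ℝ)
    (hM : ∀ y, |f y| ≤ M) (δ : ℝ) (hδ : 0 < δ) :
    ∃ g : Euc d → ℝ, Continuous g ∧ HasCompactSupport g ∧ (∀ y, |g y| ≤ M) ∧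
      dvJ η γ f - δ ≤ dvJ η γ g := by
  have hM0 : 0 ≤ M := (abs_nonneg _).trans (hM 0)
  have hfi : Integrable f (η + γ) :=
    Integrable.of_bound hf.aestronglyMeasurable M (ae_of_all _ fun y => hM y)
  obtain ⟨g0, hg0c, hg0i, hg0, -⟩ := hfi.exists_hasCompactSupport_integral_sub_le
    (ε := δ / (1 + Real.exp M)) (by positivity)
  set g : Euc d → ℝ := fun y => max (-M) (min M (g0 y)) with hg
  have hgc : Continuous g := by fun_prop
  have hgM : ∀ y, |g y| ≤ M := fun y => by
    rw [abs_le]; exact ⟨le_max_left _ _, max_le (by linarith) (min_le_left _ _)⟩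
  have hgs : HasCompactSupport g := by
    refine hg0c.comp_left (g := fun t : ℝ => max (-M) (min M t)) ?_
    simp [hM0]
  have bi : ∀ (u : Euc d → ℝ) (hu : Measurable u) (hb : ∀ y, |u y| ≤ M) (ν : Measure (Euc d))
      [IsFiniteMeasure ν], Integrable u ν := fun u hu hb ν _ =>
    Integrable.of_bound hu.aestronglyMeasurable M (ae_of_all _ fun y => hb y)
  have be : ∀ (u : Euc d → ℝ) (hu : Measurable u) (hb : ∀ y, |u y| ≤ M) (ν : Measure (Euc d))
      [IsFiniteMeasure ν], Integrable (fun y => Real.exp (u y) - 1) ν := fun u hu hb ν _ =>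
    (Integrable.of_bound (Real.measurable_exp.comp hu).aestronglyMeasurable (Real.exp M)
      (ae_of_all _ fun y => by
        simpa using (abs_le.1 (hb y)).2)).sub (integrable_const _)
  refine ⟨g, hgc, hgs, hgM, ?_⟩
  have i1 : ∀ ν : Measure (Euc d), [IsFiniteMeasure ν] → Integrable (fun y => |f y - g y|) ν :=
    fun ν _ => ((bi f hf hM ν).sub (bi g hgc.measurable hgM ν)).abs
  have hle : ∫ y, |f y - g y| ∂(η + γ) ≤ δ / (1 + Real.exp M) := by
    refine le_trans (integral_mono_of_nonneg (ae_of_all _ fun _ => abs_nonneg _) ?_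
      (ae_of_all _ fun y => ?_)) hg0i
    · refine (hfi.sub ?_).norm
      exact hg0.integrable_of_hasCompactSupport hg0c
    · have := hM y
      rw [abs_le] at this
      simp only [hg, Real.norm_eq_abs]
      rcases le_total M (g0 y) with h1 | h1
      · rw [min_eq_left h1, max_eq_right (by linarith), abs_le]
        constructor <;> cases abs_cases (f y - g0 y) <;> linarith
      · rw [min_eq_right h1]
        rcases le_total (-M) (g0 y) with h2 | h2
        · rw [max_eq_right h2]
        · rw [max_eq_left h2, abs_le]
          constructor <;> cases abs_cases (f y - g0 y) <;> linarith
  rw [integral_add_measure (i1 η) (i1 γ), le_div_iff₀ (by positivity)] at hle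
  have k1 : ∫ y, f y ∂η - ∫ y, g y ∂η ≤ ∫ y, |f y - g y| ∂η := by
    rw [← integral_sub (bi f hf hM η) (bi g hgc.measurable hgM η)]
    exact integral_mono ((bi f hf hM η).sub (bi g hgc.measurable hgM η)) (i1 η)
      fun y => le_abs_self _
  have k2 : ∫ y, (Real.exp (g y) - 1) ∂γ - ∫ y, (Real.exp (f y) - 1) ∂γ
      ≤ Real.exp M * ∫ y, |f y - g y| ∂γ := by
    rw [← integral_sub (be g hgc.measurable hgM γ) (be f hf hM γ), ← integral_const_mul]
    refine integral_mono ((be g hgc.measurable hgM γ).sub (be f hf hM γ))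
      ((i1 γ).const_mul _) fun y => ?_
    have := exp_lip M (g y) (f y) (abs_le.1 (hgM y)).2 (abs_le.1 (hM y)).2
    rw [abs_sub_comm (g y)] at this
    have h2 := le_abs_self (Real.exp (g y) - Real.exp (f y))
    simp only
    linarith
  have p1 : 0 ≤ ∫ y, |f y - g y| ∂η := integral_nonneg fun _ => abs_nonneg _
  have p2 : 0 ≤ ∫ y, |f y - g y| ∂γ := integral_nonneg fun _ => abs_nonneg _
  have p3 := Real.exp_pos M
  unfold dvJ
  nlinarith [mul_nonneg p1 p3.le]

/-! ### The supremum is attained over bounded functions -/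
theorem trunc_nonneg (n : ℕ) (h : ℝ) :
    0 ≤ h * Real.log (max (1 / (n + 1 : ℝ)) (min (n + 1) h)) -
      (max (1 / (n + 1 : ℝ)) (min (n + 1) h) - 1) := by
  have hn : (1 : ℝ) ≤ n + 1 := by linarith [(Nat.cast_nonneg n : (0 : ℝ) ≤ n)]
  have hn0 : (0 : ℝ) < n + 1 := by linarith
  have hi : 1 / (n + 1 : ℝ) ≤ 1 := by rw [div_le_one hn0]; exact hn
  set t := max (1 / (n + 1 : ℝ)) (min (n + 1) h) with ht
  have htp : 0 < t := lt_of_lt_of_le (by positivity) (le_max_left _ _)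
  have hk := InformationTheory.klFun_nonneg htp.le
  rw [InformationTheory.klFun_apply] at hk
  suffices 0 ≤ (h - t) * Real.log t by nlinarith
  rcases le_total (n + 1 : ℝ) h with h1 | h1
  · rw [min_eq_left h1, max_eq_right (by linarith)] at ht
    rw [ht]
    exact mul_nonneg (by linarith) (Real.log_nonneg hn)
  · rw [min_eq_right h1] at ht
    rcases le_total (1 / (n + 1 : ℝ)) h with h2 | h2
    · rw [max_eq_right h2] at ht
      simp [ht]
    · rw [max_eq_left h2] at ht
      exact mul_nonneg_of_nonpos_of_nonpos (by linarith)
        (Real.log_nonpos htp.le (by linarith))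

theorem trunc_tendsto (h : ℝ) (hh : 0 ≤ h) :
    Tendsto (fun n : ℕ => h * Real.log (max (1 / (n + 1 : ℝ)) (min (n + 1) h)) -
      (max (1 / (n + 1 : ℝ)) (min (n + 1) h) - 1)) atTop
      (nhds (InformationTheory.klFun h)) := by
  have t0 : Tendsto (fun n : ℕ => 1 / (n + 1 : ℝ)) atTop (nhds 0) :=
    tendsto_one_div_add_atTop_nhds_zero_nat
  have t1 : Tendsto (fun n : ℕ => (n + 1 : ℝ)) atTop atTop :=
    tendsto_atTop_add_const_right _ _ tendsto_natCast_atTop_atTop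
  have t2 : Tendsto (fun n : ℕ => max (1 / (n + 1 : ℝ)) (min (n + 1) h)) atTop (nhds h) := by
    have : Tendsto (fun n : ℕ => min (n + 1 : ℝ) h) atTop (nhds h) :=
      tendsto_const_nhds.congr' (by
        filter_upwards [t1.eventually_ge_atTop h] with n hn
        rw [min_eq_right hn])
    simpa [hh] using t0.max this
  have e : InformationTheory.klFun h = h * Real.log h - (h - 1) := by
    rw [InformationTheory.klFun_apply]; ring
  rw [e]
  rcases hh.eq_or_lt with rfl | hp
  · simpa using (t2.sub_const 1).neg
  · exact ((t2.log hp.ne').const_mul h).sub (t2.sub_const 1)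

theorem exists_bounded {d : ℕ} (η γ : Measure (Euc d)) [IsProbabilityMeasure η]
    [IsProbabilityMeasure γ] (c : ℝ≥0∞) (hc : c < relEnt η γ) :
    ∃ (f : Euc d → ℝ) (M : ℝ), Measurable f ∧ (∀ y, |f y| ≤ M) ∧
      c < ENNReal.ofReal (dvJ η γ f) := by
  by_cases hac : η ≪ γ
  · rw [relEnt_eq_klDiv, InformationTheory.klDiv_eq_lintegral_klFun_of_ac hac] at hc
    set h : Euc d → ℝ := fun y => (η.rnDeriv γ y).toReal with hh
    have hhm : Measurable h := (Measure.measurable_rnDeriv _ _).ennreal_toReal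
    have hh0 : ∀ y, 0 ≤ h y := fun y => ENNReal.toReal_nonneg
    set G : ℕ → Euc d → ℝ := fun n y =>
      h y * Real.log (max (1 / (n + 1 : ℝ)) (min (n + 1) (h y))) -
      (max (1 / (n + 1 : ℝ)) (min (n + 1) (h y)) - 1) with hG
    have hGm : ∀ n, Measurable (G n) := fun n => by fun_prop
    have fatou : ∫⁻ y, ENNReal.ofReal (InformationTheory.klFun (h y)) ∂γ ≤
        liminf (fun n => ∫⁻ y, ENNReal.ofReal (G n y) ∂γ) atTop := by
      refine le_trans (le_of_eq ?_)
        (lintegral_liminf_le (μ := γ) (f := fun n y => ENNReal.ofReal (G n y))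
          fun n => (hGm n).ennreal_ofReal)
      congr 1; ext y
      exact (ENNReal.tendsto_ofReal (trunc_tendsto (h y) (hh0 y))).liminf_eq.symm
    obtain ⟨n, hn⟩ := (eventually_lt_of_lt_liminf (hc.trans_le fatou)).exists
    have hn1 : (0 : ℝ) < n + 1 := by positivity
    have hnn : (1 : ℝ) ≤ n + 1 := by linarith [(Nat.cast_nonneg n : (0 : ℝ) ≤ n)]
    set f : Euc d → ℝ := fun y => Real.log (max (1 / (n + 1 : ℝ)) (min (n + 1) (h y))) with hf
    have hfm : Measurable f := by fun_prop
    have hfM : ∀ y, |f y| ≤ Real.log (n + 1) := fun y => by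
      have hpos : 0 < max (1 / (n + 1 : ℝ)) (min (n + 1) (h y)) :=
        lt_of_lt_of_le (by positivity) (le_max_left _ _)
      rw [abs_le]
      constructor
      · rw [← Real.log_inv, ← one_div]
        exact Real.log_le_log (by positivity) (le_max_left _ _)
      · refine Real.log_le_log hpos (max_le ?_ (min_le_left _ _))
        rw [div_le_iff₀ hn1]; nlinarith
    refine ⟨f, Real.log (n + 1), hfm, hfM, hn.trans_le (le_of_eq ?_)⟩
    have hfi : Integrable f η :=
      Integrable.of_bound hfm.aestronglyMeasurable _ (ae_of_all _ fun y => hfM y)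
    have := Measure.haveLebesgueDecomposition_of_sigmaFinite η γ
    have hi : Integrable (fun y => (η.rnDeriv γ y).toReal • f y) γ :=
      (integrable_rnDeriv_smul_iff hac).2 hfi
    have hef : Integrable (fun y => Real.exp (f y) - 1) γ :=
      (Integrable.of_bound (Real.measurable_exp.comp hfm).aestronglyMeasurable
        (Real.exp (Real.log (n + 1)))
        (ae_of_all _ fun y => by
          simpa only [Function.comp, Real.norm_eq_abs, Real.abs_exp, Real.exp_le_exp] using
            (abs_le.1 (hfM y)).2)).sub (integrable_const _)
    have hGe : G n = fun y => (η.rnDeriv γ y).toReal • f y - (Real.exp (f y) - 1) := by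
      ext y
      have hpos : 0 < max (1 / (n + 1 : ℝ)) (min (n + 1) (h y)) :=
        lt_of_lt_of_le (by positivity) (le_max_left _ _)
      have he : Real.exp (f y) = max (1 / (n + 1 : ℝ)) (min (n + 1) (h y)) := Real.exp_log hpos
      rw [he]
      rfl
    unfold dvJ
    rw [← integral_rnDeriv_smul hac, ← integral_sub hi hef]
    have hsub : Integrable (fun y => (η.rnDeriv γ y).toReal • f y - (Real.exp (f y) - 1)) γ :=
      hi.sub hef
    rw [ofReal_integral_eq_lintegral_ofReal hsub]
    · rw [hGe]
    · refine ae_of_all _ fun y => ?_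
      have := trunc_nonneg n (h y)
      change 0 ≤ G n y at this
      rw [hGe] at this
      exact this
  · have hcT : c ≠ ⊤ := hc.ne_top
    rw [Measure.AbsolutelyContinuous] at hac
    push Not at hac
    obtain ⟨A0, h0, h1⟩ := hac
    set A := toMeasurable γ A0
    have hA : MeasurableSet A := measurableSet_toMeasurable _ _
    have hγA : γ A = 0 := by rw [measure_toMeasurable]; exact h0
    have hηA : 0 < η A := (pos_iff_ne_zero.2 h1).trans_le (measure_mono (subset_toMeasurable _ _))
    have hr : 0 < η.real A := ENNReal.toReal_pos hηA.ne' (measure_ne_top _ _)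
    set t : ℝ := (c.toReal + 1) / η.real A with ht
    have ht0 : 0 ≤ t := by positivity
    refine ⟨A.indicator fun _ => t, t, measurable_const.indicator hA, fun y => ?_, ?_⟩
    · by_cases hy : y ∈ A <;> simp [hy, ht0, abs_of_nonneg]
    · have e1 : ∫ y, (Real.exp (A.indicator (fun _ => t) y) - 1) ∂γ = 0 := by
        rw [← integral_zero (Euc d) ℝ (μ := γ)]
        refine integral_congr_ae ?_
        have : ∀ᵐ y ∂γ, y ∉ A := measure_eq_zero_iff_ae_notMem.1 hγA
        filter_upwards [this] with y hy
        simp [hy]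
      unfold dvJ
      rw [e1, integral_indicator_const _ hA, sub_zero, smul_eq_mul, ht,
        mul_div_cancel₀ _ hr.ne']
      conv_lhs => rw [← ENNReal.ofReal_toReal hcT]
      rw [ENNReal.ofReal_lt_ofReal_iff (by positivity)]
      linarith

/-! ### Gaussian measures -/
theorem gaussDensity_nonneg {d : ℕ} (x y : Euc d) : 0 ≤ gaussDensity x y := by
  unfold gaussDensity; positivity

theorem gaussDensity_continuous {d : ℕ} (x : Euc d) : Continuous (gaussDensity x) := by
  unfold gaussDensity; fun_prop

theorem integral_rexp_b {d : ℕ} (b : ℝ) (hb : 0 < b) :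
    ∫ v : Euc d, Real.exp (-b * ‖v‖ ^ 2) = (Real.pi / b) ^ ((d : ℝ) / 2) := by
  rw [GaussianFourier.integral_rexp_neg_mul_sq_norm hb]
  simp

theorem integrable_rexp_b {d : ℕ} (b : ℝ) (hb : 0 < b) :
    Integrable (fun v : Euc d => Real.exp (-b * ‖v‖ ^ 2)) := by
  by_contra h
  have h1 := integral_rexp_b (d := d) b hb
  rw [integral_undef h] at h1
  have : 0 < (Real.pi / b) ^ ((d : ℝ) / 2) := by positivity
  linarith

theorem gaussDensity_eq {d : ℕ} (x y : Euc d) :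
    gaussDensity x y = gaussDensity 0 (y - x) := by
  unfold gaussDensity; simp

theorem gaussDensity_zero {d : ℕ} (y : Euc d) :
    gaussDensity 0 y = (2 * Real.pi) ^ (-(d : ℝ) / 2) * Real.exp (-(1 / 2) * ‖y‖ ^ 2) := by
  unfold gaussDensity
  rw [sub_zero]; congr 2; ring

theorem integrable_gaussDensity {d : ℕ} (x : Euc d) : Integrable (gaussDensity x) := by
  have h0 : Integrable (gaussDensity (0 : Euc d)) := by
    simp_rw [funext gaussDensity_zero]
    exact (integrable_rexp_b _ (by norm_num)).const_mul _
  rw [funext (gaussDensity_eq x)]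
  exact h0.comp_sub_right x

theorem integral_gaussDensity {d : ℕ} (x : Euc d) : ∫ y, gaussDensity x y = 1 := by
  simp_rw [gaussDensity_eq x]
  rw [integral_sub_right_eq_self (fun y => gaussDensity (0 : Euc d) y) x]
  simp_rw [gaussDensity_zero]
  rw [integral_const_mul, integral_rexp_b _ (by norm_num)]
  have : Real.pi / (1 / 2) = 2 * Real.pi := by ring
  rw [this, ← Real.rpow_add (by positivity)]
  have : -(d : ℝ) / 2 + d / 2 = 0 := by ring
  rw [this, Real.rpow_zero]

instance gaussian_prob_s10 {d : ℕ} (x : Euc d) : IsProbabilityMeasure (gaussian x) := by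
  constructor
  unfold gaussian
  rw [withDensity_apply _ MeasurableSet.univ, Measure.restrict_univ,
    ← ofReal_integral_eq_lintegral_ofReal (integrable_gaussDensity x)
      (ae_of_all _ fun y => gaussDensity_nonneg x y), integral_gaussDensity, ENNReal.ofReal_one]

theorem gaussian_secondMoment {d : ℕ} (x : Euc d) : FiniteSecondMoment (gaussian x) := by
  unfold FiniteSecondMoment gaussian
  have hm : Measurable fun y => ENNReal.ofReal (gaussDensity x y) :=
    (gaussDensity_continuous x).measurable.ennreal_ofReal
  rw [lintegral_withDensity_eq_lintegral_mul _ hm (by fun_prop)]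
  set K : ℝ := (2 * Real.pi) ^ (-(d : ℝ) / 2)
  have hi : Integrable (fun y : Euc d =>
      8 * K * Real.exp (-(1 / 4) * ‖y - x‖ ^ 2) + 2 * ‖x‖ ^ 2 * gaussDensity x y) :=
    (((integrable_rexp_b (1 / 4) (by norm_num)).comp_sub_right x).const_mul _).add
      ((integrable_gaussDensity x).const_mul _)
  refine lt_of_le_of_lt (lintegral_mono fun y => ?_) hi.lintegral_lt_top
  simp only [Pi.mul_apply]
  rw [← ENNReal.ofReal_mul (gaussDensity_nonneg x y)]
  apply ENNReal.ofReal_le_ofReal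
  have hK : 0 ≤ K := by positivity
  have h1 : ‖y‖ ^ 2 ≤ 2 * ‖y - x‖ ^ 2 + 2 * ‖x‖ ^ 2 := by
    have : ‖y‖ ≤ ‖y - x‖ + ‖x‖ := by simpa using norm_add_le (y - x) x
    nlinarith [sq_nonneg (‖y - x‖ - ‖x‖), norm_nonneg y]
  have h2 : ‖y - x‖ ^ 2 * Real.exp (-‖y - x‖ ^ 2 / 2) ≤
      4 * Real.exp (-(1 / 4) * ‖y - x‖ ^ 2) := by
    have a1 := Real.add_one_le_exp (1 / 4 * ‖y - x‖ ^ 2)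
    have a2 : Real.exp (-(1 / 4) * ‖y - x‖ ^ 2) =
      Real.exp (1 / 4 * ‖y - x‖ ^ 2) * Real.exp (-‖y - x‖ ^ 2 / 2) := by
      rw [← Real.exp_add]; ring_nf
    rw [a2]
    nlinarith [Real.exp_pos (-‖y - x‖ ^ 2 / 2)]
  have h3 : gaussDensity x y * ‖y - x‖ ^ 2 ≤ K * (4 * Real.exp (-(1 / 4) * ‖y - x‖ ^ 2)) := by
    have : gaussDensity x y * ‖y - x‖ ^ 2 =
      K * (‖y - x‖ ^ 2 * Real.exp (-‖y - x‖ ^ 2 / 2)) := by unfold gaussDensity; ring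
    rw [this]
    exact mul_le_mul_of_nonneg_left h2 hK
  nlinarith [mul_le_mul_of_nonneg_left h1 (gaussDensity_nonneg x y)]

theorem integrable_id_of_moment {d : ℕ} (μ : Measure (Euc d)) [IsProbabilityMeasure μ]
    (h : FiniteSecondMoment μ) : Integrable (fun y : Euc d => y) μ := by
  have h2 : Integrable (fun y : Euc d => ‖y‖ ^ 2) μ :=
    (lintegral_ofReal_ne_top_iff_integrable (by fun_prop)
      (ae_of_all _ fun _ => by positivity)).1 h.ne
  refine Integrable.mono' (h2.add (integrable_const (1 : ℝ))) (by fun_prop)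
    (ae_of_all _ fun y => ?_)
  simp only [Pi.add_apply]
  nlinarith [sq_nonneg (‖y‖ - 1), norm_nonneg y]

theorem bary_gaussian {d : ℕ} (x : Euc d) : bary (gaussian x) = x := by
  have hi := integrable_id_of_moment _ (gaussian_secondMoment x)
  have hz : ∫ y, (y - x) ∂(gaussian x) = 0 := by
    unfold gaussian
    rw [integral_withDensity_eq_integral_toReal_smul
      (gaussDensity_continuous x).measurable.ennreal_ofReal (ae_of_all _ fun _ => by simp)]
    have : ∀ y, (ENNReal.ofReal (gaussDensity x y)).toReal • (y - x) =
        (fun z : Euc d => gaussDensity 0 z • z) (y - x) := fun y => by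
      rw [ENNReal.toReal_ofReal (gaussDensity_nonneg x y), gaussDensity_eq]
    simp_rw [this]
    rw [integral_sub_right_eq_self (fun z : Euc d => gaussDensity 0 z • z) x]
    have h := integral_neg_eq_self (fun z : Euc d => gaussDensity 0 z • z) volume
    have h2 : ∀ z : Euc d, gaussDensity 0 (-z) • (-z) = -(gaussDensity 0 z • z) := fun z => by
      rw [gaussDensity_zero, gaussDensity_zero, norm_neg, smul_neg]
    simp_rw [h2, integral_neg] at h
    have h4 := eq_neg_iff_add_eq_zero.1 h.symm
    rw [← two_smul ℝ] at h4
    exact (smul_eq_zero.1 h4).resolve_left (by norm_num)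
  rw [integral_sub hi (integrable_const _)] at hz
  simp at hz
  exact sub_eq_zero.1 hz

/-- Log-density of `gaussian b` with respect to `gaussian x`. -/
def tilt {d : ℕ} (x b y : Euc d) : ℝ := inner ℝ (b - x) (y - x) - 1 / 2 * ‖b - x‖ ^ 2

theorem tilt_continuous {d : ℕ} (x b : Euc d) : Continuous (tilt x b) := by
  unfold tilt; fun_prop

theorem gaussDensity_tilt {d : ℕ} (x b y : Euc d) :
    gaussDensity x y * Real.exp (tilt x b y) = gaussDensity b y := by
  unfold gaussDensity tilt
  rw [mul_assoc, ← Real.exp_add]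
  congr 2
  have : y - b = (y - x) - (b - x) := by abel
  rw [this, norm_sub_sq_real (y - x) (b - x), real_inner_comm (b - x) (y - x)]
  ring

theorem gaussian_tilt {d : ℕ} (x b : Euc d) :
    gaussian b = (gaussian x).withDensity fun y => ENNReal.ofReal (Real.exp (tilt x b y)) := by
  unfold gaussian
  have hm : Measurable fun y => ENNReal.ofReal (Real.exp (tilt x b y)) :=
    (Real.continuous_exp.comp (tilt_continuous x b)).measurable.ennreal_ofReal
  rw [← withDensity_mul _ (gaussDensity_continuous x).measurable.ennreal_ofReal hm]
  congr 1; ext y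
  simp only [Pi.mul_apply]
  rw [← ENNReal.ofReal_mul (gaussDensity_nonneg x y), gaussDensity_tilt]

theorem integrable_tilt {d : ℕ} (x b : Euc d) (κ : Measure (Euc d)) [IsProbabilityMeasure κ]
    (h : FiniteSecondMoment κ) : Integrable (tilt x b) κ := by
  have hi := integrable_id_of_moment _ h
  have hj : Integrable (fun y => y - x) κ := hi.sub (integrable_const x)
  have hk : Integrable (fun y => inner ℝ (b - x) (y - x)) κ := hj.const_inner (𝕜 := ℝ) (b - x)
  exact hk.sub (integrable_const _)

theorem integral_tilt {d : ℕ} (x b : Euc d) (κ : Measure (Euc d)) [IsProbabilityMeasure κ]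
    (h : FiniteSecondMoment κ) (hb : bary κ = b) :
    ∫ y, tilt x b y ∂κ = 1 / 2 * ‖b - x‖ ^ 2 := by
  have hi := integrable_id_of_moment _ h
  have hj : Integrable (fun y => y - x) κ := hi.sub (integrable_const x)
  unfold tilt
  have hk : Integrable (fun y => inner ℝ (b - x) (y - x)) κ := hj.const_inner (𝕜 := ℝ) (b - x)
  rw [integral_sub hk (integrable_const _), integral_inner hj, integral_sub hi (integrable_const x)]
  unfold bary at hb
  rw [hb]
  simp
  ring

theorem relEnt_gaussian_lower {d : ℕ} (x : Euc d) (κ : Measure (Euc d)) [IsProbabilityMeasure κ]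
    (h : FiniteSecondMoment κ) :
    ENNReal.ofReal (1 / 2 * ‖bary κ - x‖ ^ 2) ≤ relEnt κ (gaussian x) := by
  set b := bary κ with hb
  have hm : Measurable fun y => Real.exp (tilt x b y) :=
    (Real.continuous_exp.comp (tilt_continuous x b)).measurable
  have hl : ∫⁻ y, ENNReal.ofReal (Real.exp (tilt x b y)) ∂(gaussian x) = 1 := by
    have := measure_univ (μ := gaussian b)
    rwa [gaussian_tilt x b, withDensity_apply _ MeasurableSet.univ, Measure.restrict_univ] at this
  have hi : Integrable (fun y => Real.exp (tilt x b y)) (gaussian x) :=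
    (lintegral_ofReal_ne_top_iff_integrable hm.aestronglyMeasurable
      (ae_of_all _ fun _ => (Real.exp_pos _).le)).1 (by rw [hl]; simp)
  have he : ∫ y, Real.exp (tilt x b y) ∂(gaussian x) = 1 := by
    rw [integral_eq_lintegral_of_nonneg_ae (ae_of_all _ fun _ => (Real.exp_pos _).le)
      hm.aestronglyMeasurable, hl]
    simp
  have := dv_le κ (gaussian x) (tilt x b) (integrable_tilt x b κ h) (hi.sub (integrable_const 1))
  unfold dvJ at this
  rw [integral_tilt x b κ h hb.symm, integral_sub hi (integrable_const 1), he] at this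
  simpa using this

theorem relEnt_gaussian {d : ℕ} (x b : Euc d) :
    relEnt (gaussian b) (gaussian x) = ENNReal.ofReal (1 / 2 * ‖b - x‖ ^ 2) := by
  have hm : Measurable fun y => ENNReal.ofReal (Real.exp (tilt x b y)) :=
    (Real.continuous_exp.comp (tilt_continuous x b)).measurable.ennreal_ofReal
  have hac : gaussian b ≪ gaussian x := by
    rw [gaussian_tilt x b]; exact withDensity_absolutelyContinuous _ _
  have hr : (gaussian b).rnDeriv (gaussian x) =ᵐ[gaussian x]
      fun y => ENNReal.ofReal (Real.exp (tilt x b y)) := by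
    have := Measure.rnDeriv_withDensity (gaussian x) hm
    rwa [← gaussian_tilt x b] at this
  have hlog : (fun y => Real.log ((gaussian b).rnDeriv (gaussian x) y).toReal)
      =ᵐ[gaussian b] tilt x b := by
    filter_upwards [hac.ae_le hr] with y hy
    rw [hy, ENNReal.toReal_ofReal (Real.exp_pos _).le, Real.log_exp]
  unfold relEnt
  rw [if_pos ⟨hac, (integrable_congr hlog).2 (integrable_tilt x b _ (gaussian_secondMoment b))⟩,
    integral_congr_ae hlog, integral_tilt x b _ (gaussian_secondMoment b) (bary_gaussian b)]

/-! ### Wasserstein upper bounds -/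
theorem W2sq_self {d : ℕ} (η : Measure (Euc d)) : W2sq η η = 0 := by
  unfold W2sq
  have hm : Measurable fun y : Euc d => (y, y) := by fun_prop
  refine le_antisymm (iInf₂_le_of_le (η.map fun y => (y, y)) ⟨?_, ?_⟩ ?_) bot_le
  · rw [Measure.fst, Measure.map_map measurable_fst hm]; exact Measure.map_id
  · rw [Measure.snd, Measure.map_map measurable_snd hm]; exact Measure.map_id
  · rw [lintegral_map (by fun_prop) hm]; simp

theorem W2sq_lt_top {d : ℕ} (κ η : Measure (Euc d)) [IsProbabilityMeasure κ]
    [IsProbabilityMeasure η] (h1 : FiniteSecondMoment κ) (h2 : FiniteSecondMoment η) :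
    W2sq κ η < ⊤ := by
  unfold W2sq
  refine lt_of_le_of_lt (iInf₂_le (κ.prod η) ⟨Measure.fst_prod, Measure.snd_prod⟩) ?_
  have hle : ∫⁻ p, ENNReal.ofReal (‖p.1 - p.2‖ ^ 2) ∂(κ.prod η) ≤
      ∫⁻ p, (2 * ENNReal.ofReal (‖p.1‖ ^ 2) + 2 * ENNReal.ofReal (‖p.2‖ ^ 2)) ∂(κ.prod η) := by
    refine lintegral_mono fun p => ?_
    have h2' : (2 : ℝ≥0∞) = ENNReal.ofReal 2 := by simp
    have h3 : ∀ a : ℝ≥0∞, 2 * a = ENNReal.ofReal 2 * a := fun a => by rw [← h2']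
    rw [h3, h3, ← ENNReal.ofReal_mul (by norm_num), ← ENNReal.ofReal_mul (by norm_num),
      ← ENNReal.ofReal_add (by positivity) (by positivity)]
    apply ENNReal.ofReal_le_ofReal
    have := norm_sub_le p.1 p.2
    nlinarith [sq_nonneg (‖p.1‖ - ‖p.2‖), norm_nonneg (p.1 - p.2)]
  refine lt_of_le_of_lt hle ?_
  rw [lintegral_add_left (by fun_prop), lintegral_const_mul _ (by fun_prop),
    lintegral_const_mul _ (by fun_prop)]
  have e1 : ∫⁻ p : Euc d × Euc d, ENNReal.ofReal (‖p.1‖ ^ 2) ∂(κ.prod η) < ⊤ := by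
    have := lintegral_map (μ := κ.prod η) (f := fun y : Euc d => ENNReal.ofReal (‖y‖ ^ 2))
      (g := Prod.fst) (by fun_prop) measurable_fst
    rw [← this]
    change ∫⁻ y, _ ∂((κ.prod η).fst) < ⊤
    rw [Measure.fst_prod]; exact h1
  have e2 : ∫⁻ p : Euc d × Euc d, ENNReal.ofReal (‖p.2‖ ^ 2) ∂(κ.prod η) < ⊤ := by
    have := lintegral_map (μ := κ.prod η) (f := fun y : Euc d => ENNReal.ofReal (‖y‖ ^ 2))
      (g := Prod.snd) (by fun_prop) measurable_snd
    rw [← this]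
    change ∫⁻ y, _ ∂((κ.prod η).snd) < ⊤
    rw [Measure.snd_prod]; exact h2
  exact ENNReal.add_lt_top.2 ⟨ENNReal.mul_lt_top (by simp) e1, ENNReal.mul_lt_top (by simp) e2⟩

/-! ### Lower bound on the cost -/
theorem SBcost_lower {d : ℕ} (x : Euc d) (η : Measure (Euc d)) [IsProbabilityMeasure η]
    (g : Euc d → ℝ) (hg : Continuous g) (hs : HasCompactSupport g) (M : ℝ)
    (hM : ∀ y, |g y| ≤ M) (ε : ℝ) (hε : 0 < ε) :
    ∀ᶠ β : ℝ in atTop, ENNReal.ofReal (dvJ η (gaussian x) g - ε) ≤ SBcost β x η := by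
  have huc := hs.uniformContinuous_of_continuous hg
  obtain ⟨δ, hδ, hδ'⟩ := Metric.uniformContinuous_iff.1 huc ε hε
  have hM0 : 0 ≤ M := (abs_nonneg _).trans (hM 0)
  set C : ℝ := (2 * M + 1) / δ ^ 2 with hC
  have hCpos : 0 < C := by positivity
  have hbd : ∀ y z, g z ≤ g y + ε + C * ‖y - z‖ ^ 2 := fun y z => by
    rcases lt_or_ge ‖y - z‖ δ with h | h
    · have := hδ' (a := y) (b := z) (by rwa [dist_eq_norm])
      rw [Real.dist_eq, abs_lt] at this
      have : 0 ≤ C * ‖y - z‖ ^ 2 := by positivity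
      linarith
    · have h1 : C * δ ^ 2 ≤ C * ‖y - z‖ ^ 2 := by gcongr
      have h2 : C * δ ^ 2 = 2 * M + 1 := by rw [hC]; field_simp
      have := abs_le.1 (hM y)
      have := abs_le.1 (hM z)
      linarith
  have bi : ∀ (ν : Measure (Euc d)) [IsFiniteMeasure ν], Integrable g ν := fun ν _ =>
    Integrable.of_bound hg.aestronglyMeasurable M (ae_of_all _ fun y => hM y)
  have be : Integrable (fun y => Real.exp (g y) - 1) (gaussian x) :=
    (Integrable.of_bound (Real.continuous_exp.comp hg).aestronglyMeasurable (Real.exp M)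
      (ae_of_all _ fun y => by
        simpa using (abs_le.1 (hM y)).2)).sub (integrable_const _)
  filter_upwards [eventually_ge_atTop (2 * C)] with β hβ
  unfold SBcost
  refine le_iInf₂ fun κ hκ => ?_
  have := hκ.1
  have l1 := dv_le κ (gaussian x) g (bi κ) be
  have l2 := W2sq_lower κ η g (bi κ) (bi η) ε C hCpos hbd
  have l3 : ENNReal.ofReal C * W2sq κ η ≤ ENNReal.ofReal (β / 2) * W2sq κ η := by
    gcongr; linarith
  refine le_trans ?_ (add_le_add l1 (l2.trans l3))
  refine le_trans (ENNReal.ofReal_le_ofReal (le_of_eq ?_)) ENNReal.ofReal_add_le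
  unfold dvJ; ring

/-- Limits of the Schrödinger--Bass cost as `β → ∞` and `β → 0`. -/
theorem SBcost_limits {d : ℕ} (x : Euc d) (η : Measure (Euc d))
    [IsProbabilityMeasure η] (hη : FiniteSecondMoment η) :
    Tendsto (fun β : ℝ => SBcost β x η) atTop (nhds (relEnt η (gaussian x))) ∧
    Tendsto (fun β : ℝ => SBcost β x η) (nhdsWithin 0 (Set.Ioi 0))
      (nhds (ENNReal.ofReal (1 / 2 * ‖bary η - x‖ ^ 2))) := by
  constructor
  · refine tendsto_order.2 ⟨fun c hc => ?_, fun c hc => ?_⟩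
    · obtain ⟨f, M, hf, hM, hcf⟩ := exists_bounded η (gaussian x) c hc
      have hcT : c ≠ ⊤ := hc.ne_top
      have hlt : c.toReal < dvJ η (gaussian x) f := by
        rwa [← ENNReal.ofReal_toReal hcT, ENNReal.ofReal_lt_ofReal_iff_of_nonneg
          ENNReal.toReal_nonneg] at hcf
      set δ := (dvJ η (gaussian x) f - c.toReal) / 3 with hδ
      have hδ0 : 0 < δ := by rw [hδ]; linarith
      obtain ⟨g, hg, hgs, hgM, hgJ⟩ := approx_cc η (gaussian x) f hf M hM δ hδ0
      filter_upwards [SBcost_lower x η g hg hgs M hgM δ hδ0] with β hβ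
      refine lt_of_lt_of_le ?_ hβ
      rw [← ENNReal.ofReal_toReal hcT, ENNReal.ofReal_lt_ofReal_iff_of_nonneg
          ENNReal.toReal_nonneg]
      linarith
    · refine Eventually.of_forall fun β => lt_of_le_of_lt ?_ hc
      unfold SBcost
      refine iInf₂_le_of_le η ⟨inferInstance, hη, rfl⟩ ?_
      rw [W2sq_self]; simp
  · have hW := W2sq_lt_top (gaussian (bary η)) η (gaussian_secondMoment _) hη
    have hub : ∀ β : ℝ, SBcost β x η ≤ ENNReal.ofReal (1 / 2 * ‖bary η - x‖ ^ 2) +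
        ENNReal.ofReal (β / 2) * W2sq (gaussian (bary η)) η := fun β => by
      unfold SBcost
      refine iInf₂_le_of_le (gaussian (bary η))
        ⟨inferInstance, gaussian_secondMoment _, bary_gaussian _⟩ ?_
      rw [relEnt_gaussian]
    have hlb : ∀ β : ℝ, ENNReal.ofReal (1 / 2 * ‖bary η - x‖ ^ 2) ≤ SBcost β x η := fun β => by
      unfold SBcost
      refine le_iInf₂ fun κ hκ => ?_
      have := hκ.1
      rw [← hκ.2.2]
      exact (relEnt_gaussian_lower x κ hκ.2.1).trans le_self_add
    refine tendsto_of_tendsto_of_tendsto_of_le_of_le tendsto_const_nhds ?_ hlb hub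
    have t1 : Tendsto (fun β : ℝ => ENNReal.ofReal (β / 2)) (nhdsWithin 0 (Set.Ioi 0))
        (nhds 0) := by
      have : Tendsto (fun β : ℝ => ENNReal.ofReal (β / 2)) (nhds 0) (nhds (ENNReal.ofReal (0 / 2))) :=
        (ENNReal.continuous_ofReal.comp (continuous_id.div_const 2)).tendsto 0
      simp only [zero_div, ENNReal.ofReal_zero] at this
      exact this.mono_left nhdsWithin_le_nhds
    have t2 := ENNReal.Tendsto.mul_const (b := W2sq (gaussian (bary η)) η) t1 (Or.inr hW.ne)
    rw [zero_mul] at t2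
    have t3 := t2.const_add (ENNReal.ofReal (1 / 2 * ‖bary η - x‖ ^ 2))
    rwa [add_zero] at t3
end
end
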